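/- arXiv:2211.08515 — 4 statements merged into one kernel-verified Lean document; each statement's English description precedes it below -/
import Mathlib

section
/- Let p be a prime, let k be an integer with 2 ≤ k ≤ p−2, and let S be a sequence over (ℤ/pℤ)² of length |S| = 2p−2+k having no nonempty zero-sum subsequence of length at most 2p−1−k. In G' = (ℤ/pℤ)³, identify each g = (g₁,g₂) ∈ (ℤ/pℤ)² with (g₁,g₂,0) ∈ G', let e₃ = (0,0,1), and define the sequence S' over G' as S' = ∏_{g∈S}(g + e₃) · (−e₃)^[p−k−1] · (−σ(S) − (2k−1)·e₃), where σ(S) is the sum of the terms of S and the last factor is a single term. Then S' is a minimal zero-sum sequence over G' of length 3p−2. -/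
/-!
A zero-sum subsequence of `S'` avoiding the last term consists of a lift of some `U ≤ S` with zero
sum and of `j ≤ p - k - 1` copies of `-e₃`, and the third coordinate forces `|U| ≡ j (mod p)`.
If `U` is nonempty then `2 * p - k ≤ |U| < 3 * p` by hypothesis, so the congruence leaves only
`|U| = 2 * p + j`. As the Davenport constant of `(ℤ/pℤ)²` is at most `2 * p - 1`, such a `U` splits
into two nonempty zero-sum subsequences. The shorter one has length at most `|U| / 2`, which is
less than `2 * p - k`: a contradiction. Hence all terms of `S'` but the last form a zero-sum free
sequence, and the last term is the negative of their sum.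
-/

section Multiset

variable {α β : Type*}

theorem exists_eq_add_of_le_add {s t u : Multiset α} (h : s ≤ t + u) :
    ∃ t' ≤ t, ∃ u' ≤ u, s = t' + u' := by
  classical
  refine ⟨s ∩ t, Multiset.inter_le_right, s - t, Multiset.sub_le_iff_le_add'.2 h, ?_⟩
  rw [← Multiset.sub_inter, add_tsub_cancel_of_le Multiset.inter_le_left]

theorem exists_map_eq_of_le_map {f : α → β} {s : Multiset β} {t : Multiset α} (h : s ≤ t.map f) :
    ∃ u ≤ t, u.map f = s := by
  induction s, t using Quotient.inductionOn₂ with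
  | _ l₁ l₂ =>
    obtain ⟨l, hl, hsub⟩ : l₁.Subperm (l₂.map f) := h
    obtain ⟨l', hl', rfl⟩ := List.sublist_map_iff.1 hsub
    exact ⟨l', hl'.subperm, Quotient.sound hl⟩

end Multiset

section ZeroSum

variable {G H : Type*} [AddCommGroup G] [AddCommGroup H] {F : Type*} [FunLike F G H]
  [AddMonoidHomClass F G H]

/-- A sequence over an abelian group is *zero-sum free* if the empty subsequence is its only
subsequence with sum zero. -/
def IsZeroSumFree (S : Multiset G) : Prop :=
  ∀ T ≤ S, T.sum = 0 → T = 0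

/-- `S` has no nonempty zero-sum subsequence of length at most `m`. -/
def HasNoShortZeroSum (m : ℕ) (S : Multiset G) : Prop :=
  ∀ T ≤ S, T ≠ 0 → T.card ≤ m → T.sum ≠ 0

/-- A *minimal zero-sum sequence* is a nonempty sequence with sum zero all of whose proper nonempty
subsequences have nonzero sum. -/
def IsMinimalZeroSum (S : Multiset G) : Prop :=
  S ≠ 0 ∧ S.sum = 0 ∧ ∀ T < S, T ≠ 0 → T.sum ≠ 0

variable (G) in
/-- The Davenport constant of `G` is at most `d`, that is, every sequence over `G` of length at
least `d` has a nonempty zero-sum subsequence. -/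
def DavenportLE (d : ℕ) : Prop :=
  ∀ S : Multiset G, IsZeroSumFree S → S.card < d

theorem IsZeroSumFree.map {S : Multiset G} (hS : IsZeroSumFree S) {f : F}
    (hf : Function.Injective f) : IsZeroSumFree (S.map f) := by
  intro T hT hT0
  obtain ⟨U, hU, rfl⟩ := exists_map_eq_of_le_map hT
  rw [← map_multiset_sum, map_eq_zero_iff f hf] at hT0
  rw [hS U hU hT0, Multiset.map_zero]

theorem IsMinimalZeroSum.map {S : Multiset G} (hS : IsMinimalZeroSum S) {f : F}
    (hf : Function.Injective f) : IsMinimalZeroSum (S.map f) := by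
  obtain ⟨hne, hsum, hmin⟩ := hS
  refine ⟨mt Multiset.map_eq_zero.1 hne, by rw [← map_multiset_sum, hsum, map_zero], ?_⟩
  intro T hT hT0
  obtain ⟨U, hU, rfl⟩ := exists_map_eq_of_le_map hT.le
  have hUS : U < S := hU.lt_of_ne fun h ↦ hT.ne (congrArg _ h)
  rw [← map_multiset_sum, ne_eq, map_eq_zero_iff f hf]
  exact hmin U hUS (mt Multiset.map_eq_zero.2 hT0)

theorem IsZeroSumFree.isMinimalZeroSum_cons {S : Multiset G} (hS : IsZeroSumFree S) :
    IsMinimalZeroSum (-S.sum ::ₘ S) := by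
  have hsum : (-S.sum ::ₘ S).sum = 0 := by simp
  refine ⟨Multiset.cons_ne_zero, hsum, fun T hT hT0 hTsum ↦ ?_⟩
  obtain ⟨R, hR⟩ := Multiset.le_iff_exists_add.1 hT.le
  have hRsum : R.sum = 0 := by rwa [hR, Multiset.sum_add, hTsum, zero_add] at hsum
  -- Either `T` or its complement `R` avoids the added term.
  rcases Multiset.mem_add.1 (hR ▸ Multiset.mem_cons_self _ S) with hmem | hmem
  · obtain ⟨T', rfl⟩ := Multiset.exists_cons_of_mem hmem
    have hS' : S = T' + R := by simpa only [Multiset.cons_add, Multiset.cons_inj_right] using hR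
    have hR0 : R = 0 := hS R (hS' ▸ Multiset.le_add_left R T') hRsum
    exact hT.ne (by rw [hR, hR0, add_zero])
  · obtain ⟨R', rfl⟩ := Multiset.exists_cons_of_mem hmem
    have hS' : S = T + R' := by simpa only [Multiset.add_cons, Multiset.cons_inj_right] using hR
    exact hT0 (hS T (hS' ▸ Multiset.le_add_right T R') hTsum)

theorem HasNoShortZeroSum.mono {m : ℕ} {S T : Multiset G} (hS : HasNoShortZeroSum m S)
    (hT : T ≤ S) : HasNoShortZeroSum m T := fun U hU ↦ hS U (hU.trans hT)

theorem HasNoShortZeroSum.lt_card {m : ℕ} {S T : Multiset G} (hS : HasNoShortZeroSum m S)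
    (hT : T ≤ S) (hT0 : T ≠ 0) (hsum : T.sum = 0) : m < T.card :=
  not_le.1 fun h ↦ hS T hT hT0 h hsum

theorem DavenportLE.of_injective {d : ℕ} (hH : DavenportLE H d) {f : F}
    (hf : Function.Injective f) : DavenportLE G d := fun S hS ↦ by
  simpa only [Multiset.card_map] using hH _ (hS.map hf)

theorem DavenportLE.exists_two_mul_card_le {d : ℕ} (hG : DavenportLE G d) {T : Multiset G}
    (hT : T.sum = 0) (hd : d < T.card) :
    ∃ V ≤ T, V ≠ 0 ∧ V.sum = 0 ∧ 2 * V.card ≤ T.card := by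
  obtain ⟨a, ha⟩ := Multiset.card_pos_iff_exists_mem.1 (Nat.zero_lt_of_lt hd)
  obtain ⟨T', rfl⟩ := Multiset.exists_cons_of_mem ha
  have hT' : ¬ IsZeroSumFree T' := fun h ↦ by
    have := hG T' h
    rw [Multiset.card_cons] at hd
    lia
  obtain ⟨V, hV, hVsum, hV0⟩ : ∃ V ≤ T', V.sum = 0 ∧ V ≠ 0 := by
    simpa only [IsZeroSumFree, not_forall, exists_prop] using hT'
  obtain ⟨R, rfl⟩ := Multiset.le_iff_exists_add.1 hV
  rw [← Multiset.add_cons] at hT ⊢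
  rw [Multiset.card_add]
  rcases le_total V.card (a ::ₘ R).card with hle | hle
  · exact ⟨V, Multiset.le_add_right _ _, hV0, hVsum, by lia⟩
  · rw [Multiset.sum_add, hVsum, zero_add] at hT
    exact ⟨a ::ₘ R, Multiset.le_add_left _ _, Multiset.cons_ne_zero, hT, by lia⟩

end ZeroSum

section ChevalleyWarning

open MvPolynomial

variable {ι κ : Type*} [Fintype κ] {p : ℕ} [Fact p.Prime]

/-- The reduction of zero-sum problems to Chevalley–Warning: at a point `x`, each power
`x i ^ (p - 1)` is the indicator of `x i ≠ 0`, so the `j`-th polynomial takes as value the `j`-th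
coordinate of the sum of the vectors `v i` over the support of `x`. -/
noncomputable def zeroSumPolynomial (v : κ → ι → ZMod p) (j : ι) : MvPolynomial κ (ZMod p) :=
  ∑ i, v i j • X i ^ (p - 1)

theorem totalDegree_zeroSumPolynomial_le (v : κ → ι → ZMod p) (j : ι) :
    (zeroSumPolynomial v j).totalDegree ≤ p - 1 :=
  totalDegree_finsetSum_le fun _ _ ↦
    (totalDegree_smul_le ..).trans (totalDegree_X_pow ..).le

theorem eval_zeroSumPolynomial (v : κ → ι → ZMod p) (j : ι) (x : κ → ZMod p) :
    eval x (zeroSumPolynomial v j) = (∑ i with x i ≠ 0, v i) j := by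
  simp [zeroSumPolynomial, ZMod.pow_card_sub_one, Finset.sum_filter, Finset.sum_apply, apply_ite]

variable [Fintype ι]

theorem exists_nonempty_sum_eq_zero_of_lt_card (v : κ → ι → ZMod p)
    (h : Fintype.card ι * (p - 1) < Fintype.card κ) :
    ∃ s : Finset κ, s.Nonempty ∧ ∑ i ∈ s, v i = 0 := by
  classical
  have hdeg : ∑ j, (zeroSumPolynomial v j).totalDegree < Fintype.card κ :=
    (Finset.sum_le_card_nsmul _ _ _ fun j _ ↦ totalDegree_zeroSumPolynomial_le v j).trans_lt h
  have hdvd := char_dvd_card_solutions_of_fintype_sum_lt p hdeg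
  let zeroSol : {x // ∀ j, eval x (zeroSumPolynomial v j) = 0} :=
    ⟨0, fun j ↦ by rw [eval_zeroSumPolynomial]; simp⟩
  have hcard := Nat.le_of_dvd (Fintype.card_pos_iff.2 ⟨zeroSol⟩) hdvd
  obtain ⟨⟨x, hx⟩, hne⟩ :=
    Fintype.exists_ne_of_one_lt_card ((Fact.out : p.Prime).one_lt.trans_le hcard) zeroSol
  obtain ⟨i, hi⟩ := Function.ne_iff.1 (Subtype.coe_ne_coe.2 hne)
  refine ⟨({i | x i ≠ 0} : Finset κ), ⟨i, by simpa [zeroSol] using hi⟩, funext fun j ↦ ?_⟩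
  rw [← eval_zeroSumPolynomial, hx j, Pi.zero_apply]

variable (ι p) in
theorem davenportLE_pi_zmod : DavenportLE (ι → ZMod p) (Fintype.card ι * (p - 1) + 1) := by
  classical
  intro S hS
  by_contra! hcard
  obtain ⟨s, hs, hsum⟩ := exists_nonempty_sum_eq_zero_of_lt_card (fun x : S ↦ (x : ι → ZMod p))
    (by rw [Multiset.card_coe]; lia)
  have hle : s.val.map (fun x : S ↦ (x : ι → ZMod p)) ≤ S :=
    (Multiset.map_le_map (Finset.val_le_iff.2 s.subset_univ)).trans_eq S.map_univ_coe
  exact hs.ne_empty (Finset.val_eq_zero.1 (Multiset.map_eq_zero.1 (hS _ hle hsum)))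

variable (p) in
theorem davenportLE_zmod_prod_zmod : DavenportLE (ZMod p × ZMod p) (2 * p - 1) := by
  have hp := (Fact.out : p.Prime).two_le
  have hD := davenportLE_pi_zmod (Fin 2) p
  rw [Fintype.card_fin, show 2 * (p - 1) + 1 = 2 * p - 1 by lia] at hD
  exact hD.of_injective (LinearEquiv.finTwoArrow (ZMod p) (ZMod p)).symm.injective

end ChevalleyWarning

section Lift

variable {G : Type*} [AddCommGroup G] {n : ℕ}

variable (n) in
/-- The sequence `∏_{g ∈ S} (g + e) · (-e)^[m]` over `G × ℤ/nℤ`, where `e = (0, 1)`. -/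
def heightOneLift (m : ℕ) (S : Multiset G) : Multiset (G × ZMod n) :=
  S.map (fun g ↦ (g, 1)) + Multiset.replicate m (0, -1)

theorem card_heightOneLift (m : ℕ) (S : Multiset G) :
    (heightOneLift n m S).card = S.card + m := by
  simp [heightOneLift]

theorem sum_heightOneLift (m : ℕ) (S : Multiset G) :
    (heightOneLift n m S).sum = (S.sum, (S.card : ZMod n) - m) := by
  induction S using Multiset.induction_on with
  | empty => simp [heightOneLift]
  | cons g S ih =>
    rw [heightOneLift, Multiset.map_cons, Multiset.cons_add, Multiset.sum_cons, ← heightOneLift,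
      ih, Multiset.sum_cons, Multiset.card_cons, Prod.mk_add_mk, Nat.cast_succ]
    congr 1
    ring

theorem exists_eq_heightOneLift_of_le {m : ℕ} {S : Multiset G} {T : Multiset (G × ZMod n)}
    (hT : T ≤ heightOneLift n m S) : ∃ U ≤ S, ∃ j ≤ m, T = heightOneLift n j U := by
  obtain ⟨A, hA, R, hR, rfl⟩ := exists_eq_add_of_le_add hT
  obtain ⟨U, hU, rfl⟩ := exists_map_eq_of_le_map hA
  obtain ⟨j, hj, rfl⟩ := Multiset.le_replicate_iff.1 hR
  exact ⟨U, hU, j, hj, rfl⟩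

theorem HasNoShortZeroSum.eq_zero_of_card_modEq {k j : ℕ} (hD : DavenportLE G (2 * n - 1))
    {U : Multiset G} (hU : HasNoShortZeroSum (2 * n - 1 - k) U) (hcard : U.card ≤ 2 * n - 2 + k)
    (hsum : U.sum = 0) (hj : j + k < n) (hmod : U.card ≡ j [MOD n]) : U = 0 := by
  by_contra hU0
  have hUlong := hU.lt_card le_rfl hU0 hsum
  obtain ⟨q, hq⟩ : ∃ q, U.card = j + n * q := by
    obtain ⟨q, hq⟩ := (Nat.modEq_iff_dvd' (by lia)).1 hmod.symm
    exact ⟨q, by lia⟩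
  have hq_two : q = 2 := by
    have hq_lt : q < 3 := by
      by_contra! h
      have := Nat.mul_le_mul_left n h
      lia
    interval_cases q <;> lia
  obtain ⟨V, hV, hV0, hVsum, hVcard⟩ := hD.exists_two_mul_card_le hsum (by lia)
  have hVlong := hU.lt_card hV hV0 hVsum
  lia

theorem HasNoShortZeroSum.isZeroSumFree_heightOneLift {k m : ℕ} (hD : DavenportLE G (2 * n - 1))
    {S : Multiset G} (hS : HasNoShortZeroSum (2 * n - 1 - k) S)
    (hcard : S.card ≤ 2 * n - 2 + k) (hm : m + k < n) : IsZeroSumFree (heightOneLift n m S) := by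
  intro T hT hTsum
  obtain ⟨U, hU, j, hj, rfl⟩ := exists_eq_heightOneLift_of_le hT
  rw [sum_heightOneLift, Prod.mk_eq_zero, sub_eq_zero, ZMod.natCast_eq_natCast_iff] at hTsum
  obtain ⟨hUsum, hmod⟩ := hTsum
  have hU0 : U = 0 :=
    (hS.mono hU).eq_zero_of_card_modEq hD ((Multiset.card_le_card hU).trans hcard) hUsum (by lia)
      hmod
  subst hU0
  have hj0 : 0 = j := Nat.ModEq.eq_of_lt_of_lt hmod (by lia) (by lia)
  rw [← hj0]
  rfl

end Lift

theorem stmt_9_general {G : Type*} [AddCommGroup G] {n k : ℕ} (hD : DavenportLE G (2 * n - 1))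
    (hk : 1 ≤ k) (hkn : k < n) {S : Multiset G} (hlen : S.card = 2 * n - 2 + k)
    (hzs : HasNoShortZeroSum (2 * n - 1 - k) S) {S' : Multiset (G × ZMod n)}
    (hS' : S' = S.map (fun g ↦ (g, 1)) + Multiset.replicate (n - k - 1) (0, -1) +
      {(-S.sum, -((2 * k - 1 : ℕ) : ZMod n))}) :
    S'.card = 3 * n - 2 ∧ IsMinimalZeroSum S' := by
  have hlast : (-S.sum, -((2 * k - 1 : ℕ) : ZMod n)) = -(heightOneLift n (n - k - 1) S).sum := by
    have hheight : S.card = n + (2 * k - 1) + (n - k - 1) := by lia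
    rw [sum_heightOneLift, hheight]
    simp
  rw [← heightOneLift, hlast, add_comm, Multiset.singleton_add] at hS'
  subst hS'
  refine ⟨?_, (hzs.isZeroSumFree_heightOneLift hD hlen.le (by lia)).isMinimalZeroSum_cons⟩
  rw [Multiset.card_cons, card_heightOneLift]
  lia

/-- Claim A: lifting `S` over `(ℤ/pℤ)²` to
`S' = ∏_{g∈S}(g+e₃) · (-e₃)^[p-k-1] · (-σ(S)-(2k-1)e₃)` in `(ℤ/pℤ)³` produces a minimal
zero-sum sequence of length `3p-2`. -/
theorem stmt_9 (p : ℕ) (hp : p.Prime) (k : ℕ) (hk1 : 2 ≤ k) (hk2 : k ≤ p - 2)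
    (S : Multiset (ZMod p × ZMod p)) (hlen : Multiset.card S = 2 * p - 2 + k)
    (hzs : ∀ T ≤ S, T ≠ 0 → Multiset.card T ≤ 2 * p - 1 - k → T.sum ≠ 0)
    (S' : Multiset (ZMod p × ZMod p × ZMod p))
    (hS' : S' = Multiset.map (fun g : ZMod p × ZMod p => (g.1, g.2, (1 : ZMod p))) S +
        Multiset.replicate (p - k - 1) ((0, 0, -1) : ZMod p × ZMod p × ZMod p) +
        {(-(S.sum.1), -(S.sum.2), -((2 * k - 1 : ℕ) : ZMod p))}) :
    Multiset.card S' = 3 * p - 2 ∧ S' ≠ 0 ∧ S'.sum = 0 ∧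
      ∀ T < S', T ≠ 0 → T.sum ≠ 0 := by
  have : Fact p.Prime := ⟨hp⟩
  have hp2 := hp.two_le
  obtain ⟨hcard, hmin⟩ :=
    stmt_9_general (davenportLE_zmod_prod_zmod p) (by lia) (by lia) hlen hzs rfl
  have hmin' : IsMinimalZeroSum S' := by
    simpa [hS'] using hmin.map (AddEquiv.prodAssoc (P := ZMod p)).injective
  exact ⟨by simpa [hS'] using hcard, hmin'⟩
end

section
/- Let p be a prime, let G be a finite abelian p-group, let ℓ ≥ 1, and let g : Fin ℓ → G be a sequence over G. Suppose that every sequence over G of length ℓ contains a nonempty zero-sum subsequence (i.e., ℓ ≥ D(G), the Davenport constant of G). For each i ∈ [0, ℓ], let N^i(g) denote the number of subsets I ⊆ Fin ℓ with |I| = i and ∑_{j∈I} g(j) = 0 (so N^0(g) = 1). Then ∑_{i=0}^{ℓ} (−1)^i · N^i(g) ≡ 0 (mod p). -/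
/-!
Write `X ^ a` for the basis element of `𝔽_p[G]` at `a : G`. The signed count of zero-sum subsets is
the constant coefficient of `∏ j, (1 - X ^ g j)`, so it suffices that this product of `ℓ` elements
of the augmentation ideal vanishes. Let `G` be the direct sum of cyclic groups of orders `n i`
generated by `u i`. Since `n i` is a power of `p`, `(1 - X ^ u i) ^ n i = 1 - X ^ (n i • u i) = 0`;
as the `1 - X ^ u i` generate the augmentation ideal, its `(∑ i, (n i - 1) + 1)`-th power vanishes.
The sequence in which each `u i` is repeated `n i - 1` times is zero-sum free, so
`∑ i, (n i - 1) + 1 ≤ D(G) ≤ ℓ`.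
-/

open Finset Submodule

theorem sum_pow_eq_zero_of_pow_eq_zero {R ι : Type*} [CommSemiring R] {s : Finset ι} {f : ι → R}
    {n : ι → ℕ} (h : ∀ i ∈ s, f i ^ n i = 0) :
    (∑ i ∈ s, f i) ^ (∑ i ∈ s, (n i - 1) + 1) = 0 := by
  classical
  induction s using Finset.induction_on with
  | empty => simp
  | insert a s ha ih =>
    rw [sum_insert ha, sum_insert ha]
    refine (Commute.all _ _).add_pow_eq_zero_of_add_le_succ_of_pow_eq_zero
      (h a (mem_insert_self a s)) (ih fun i hi => h i (mem_insert_of_mem hi)) ?_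
    omega

theorem sum_range_mul_card_filter_card_eq {R κ : Type*} [CommSemiring R] [Fintype κ]
    (P : Finset κ → Prop) [DecidablePred P] (f : ℕ → R) :
    ∑ i ∈ range (Fintype.card κ + 1), f i * (#{I : Finset κ | #I = i ∧ P I} : R) =
      ∑ I with P I, f #I := by
  have hmaps : ∀ I ∈ ({I | P I} : Finset (Finset κ)), #I ∈ range (Fintype.card κ + 1) :=
    fun I _ => mem_range_succ_iff.2 (card_le_univ I)
  rw [← sum_fiberwise_of_maps_to hmaps]
  refine sum_congr rfl fun i _ => ?_
  have hconst : ∀ I ∈ ({I | P I} : Finset (Finset κ)).filter (#· = i), f #I = f i :=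
    fun I hI => congrArg f (mem_filter.1 hI).2
  rw [sum_congr rfl hconst, sum_const, nsmul_eq_mul, mul_comm, filter_filter]
  simp only [and_comm]

theorem exists_iSupIndep_span_singleton_closure_range_eq_top (G : Type*) [AddCommGroup G]
    [Finite G] :
    ∃ (ι : Type) (_ : Fintype ι) (u : ι → G),
      iSupIndep (fun i => ℤ ∙ u i) ∧ AddSubgroup.closure (Set.range u) = ⊤ := by
  classical
  obtain ⟨ι, _, n, -, ⟨e₀⟩⟩ := AddCommGroup.equiv_directSum_zmod_of_finite' G
  let e : G ≃+ (∀ i, ZMod (n i)) := e₀.trans (DirectSum.addEquivProd _)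
  let u : ι → G := fun i => e.symm (Pi.single i 1)
  have he : ∀ (i : ι) (z : ℤ), e (z • u i) = Pi.single i (z : ZMod (n i)) := fun i z => by
    rw [map_zsmul, e.apply_symm_apply, ← Pi.single_smul, zsmul_one]
  refine ⟨ι, inferInstance, u, ?_, ?_⟩
  · rw [iSupIndep_iff_finsetSum_eq_zero_imp_eq_zero]
    intro s v hv hsum i hi
    choose! z hz using fun i (hi : i ∈ s) => mem_span_singleton.1 (hv i hi)
    have hev : ∀ j ∈ s, e (v j) = Pi.single j (z j : ZMod (n j)) := fun j hj => by
      rw [← hz j hj, he]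
    have hzi : (z i : ZMod (n i)) = 0 := by
      have hcoord := congrFun (congrArg e hsum) i
      rwa [map_sum, sum_congr rfl hev, Finset.sum_apply, sum_pi_single, if_pos hi, map_zero,
        Pi.zero_apply] at hcoord
    rw [← e.map_eq_zero_iff, hev i hi, hzi, Pi.single_zero]
  · refine (AddSubgroup.eq_top_iff' _).2 fun a => ?_
    choose z hz using fun i => ZMod.intCast_surjective (e a i)
    have ha : a = ∑ i, z i • u i := e.injective <| by
      simp only [map_sum, he, hz, univ_sum_single]
    rw [ha]
    exact sum_mem fun i _ => zsmul_mem (AddSubgroup.subset_closure (Set.mem_range_self i)) _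

theorem sum_addOrderOf_sub_one_lt_card_of_iSupIndep {G ι κ : Type*} [AddCommGroup G] [Fintype ι]
    [Fintype κ] {u : ι → G} (hu : iSupIndep fun i => ℤ ∙ u i)
    (hκ : ∀ h : κ → G, ∃ I : Finset κ, I.Nonempty ∧ ∑ j ∈ I, h j = 0) :
    ∑ i, (addOrderOf (u i) - 1) < Fintype.card κ := by
  classical
  by_contra! hle
  obtain ⟨f⟩ : Nonempty (κ ↪ Σ i, Fin (addOrderOf (u i) - 1)) :=
    Function.Embedding.nonempty_of_card_le (by simpa using hle)
  obtain ⟨I, ⟨j, hj⟩, hI⟩ := hκ fun j => u (f j).1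
  let mult : ι → ℕ := fun i => #{k ∈ I | (f k).1 = i}
  have hsum : ∑ i, mult i • u i = 0 := by
    rw [← hI, ← sum_fiberwise I (fun k => (f k).1)]
    exact sum_congr rfl fun i _ => (sum_eq_card_nsmul fun k hk => by rw [(mem_filter.1 hk).2]).symm
  have hdvd : ∀ i, addOrderOf (u i) ∣ mult i := fun i =>
    addOrderOf_dvd_iff_nsmul_eq_zero.2 <|
      (iSupIndep_iff_finsetSum_eq_zero_imp_eq_zero _).1 hu univ _
        (fun i _ => nsmul_mem (mem_span_singleton_self (u i)) _) hsum i (mem_univ i)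
  have hmult : ∀ i, mult i ≤ addOrderOf (u i) - 1 := fun i => by
    have hfiber : ({k ∈ I | (f k).1 = i}).map f ⊆ univ.map (.sigmaMk i) := fun x hx => by
      obtain ⟨k, hk, rfl⟩ := mem_map.1 hx
      obtain rfl := (mem_filter.1 hk).2
      exact mem_map_of_mem _ (mem_univ (f k).2)
    simpa using card_le_card hfiber
  have hpos : 0 < mult (f j).1 := card_pos.2 ⟨j, mem_filter.2 ⟨hj, rfl⟩⟩
  have hle' := Nat.le_of_dvd hpos (hdvd _)
  have := hmult (f j).1
  omega

section GroupAlgebra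

open AddMonoidAlgebra

theorem coeff_prod_one_sub_single {R M κ : Type*} [CommRing R] [AddCommMonoid M] [DecidableEq M]
    (s : Finset κ) (g : κ → M) (a : M) :
    (∏ j ∈ s, (1 - single (g j) (1 : R))).coeff a =
      ∑ I ∈ s.powerset with ∑ j ∈ I, g j = a, (-1) ^ #I := by
  simp only [sub_eq_add_neg, ← single_neg, prod_one_add, prod_single, prod_const, coeff_sum,
    coeff_single, Finsupp.coe_finsetSum, Finset.sum_apply, Finsupp.single_apply, sum_filter]

theorem one_sub_single_pow_char_pow_eq_zero {R M : Type*} [CommRing R] [AddCommMonoid M] {p : ℕ}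
    [Fact p.Prime] [CharP R p] {k : ℕ} {a : M} (ha : p ^ k • a = 0) :
    (1 - single a (1 : R)) ^ p ^ k = 0 := by
  have : CharP R[M] p := charP_of_injective_algebraMap (FaithfulSMul.algebraMap_injective R R[M]) p
  rw [sub_pow_char_pow, single_pow, ha, one_pow, one_pow, one_def, sub_self]

theorem one_sub_single_mem_of_mem_closure {R G : Type*} [CommRing R] [AddCommGroup G]
    {J : Ideal R[G]} {s : Set G} (hs : ∀ a ∈ s, 1 - single a (1 : R) ∈ J) {a : G}
    (ha : a ∈ AddSubgroup.closure s) : 1 - single a (1 : R) ∈ J := by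
  induction ha using AddSubgroup.closure_induction with
  | mem a ha => exact hs a ha
  | zero => simp [← one_def]
  | add a b _ _ ha hb =>
    have hadd : 1 - single (a + b) (1 : R) = 1 - single a 1 + single a 1 * (1 - single b 1) := by
      rw [mul_sub, single_mul_single, mul_one, mul_one, sub_add_sub_cancel]
    exact hadd ▸ J.add_mem ha (J.mul_mem_left _ hb)
  | neg a _ ha =>
    have hneg : 1 - single (-a) (1 : R) = -single (-a) 1 * (1 - single a 1) := by
      rw [neg_mul, mul_sub, single_mul_single, mul_one, mul_one, neg_add_cancel, ← one_def, neg_sub]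
    exact hneg ▸ J.mul_mem_left _ ha

theorem prod_one_sub_single_eq_zero_of_closure_eq_top {R G ι κ : Type*} [CommRing R]
    [AddCommGroup G] [Fintype ι] {p : ℕ} [Fact p.Prime] [CharP R p] {u : ι → G}
    (hord : ∀ i, ∃ k, addOrderOf (u i) = p ^ k) (hgen : AddSubgroup.closure (Set.range u) = ⊤)
    {s : Finset κ} (hs : ∑ i, (addOrderOf (u i) - 1) < #s) (g : κ → G) :
    ∏ j ∈ s, (1 - single (g j) (1 : R)) = 0 := by
  have hpow : ∀ i, (1 - single (u i) (1 : R)) ^ addOrderOf (u i) = 0 := fun i => by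
    obtain ⟨k, hk⟩ := hord i
    rw [hk]
    exact one_sub_single_pow_char_pow_eq_zero (hk ▸ addOrderOf_nsmul_eq_zero (u i))
  let J : Ideal R[G] := ∑ i, Ideal.span {1 - single (u i) 1}
  have hJ : J ^ #s = 0 :=
    pow_eq_zero_of_le hs <| sum_pow_eq_zero_of_pow_eq_zero fun i _ => by
      rw [Ideal.span_singleton_pow, hpow, Ideal.span_singleton_zero, Ideal.zero_eq_bot]
  have hu : ∀ i, 1 - single (u i) 1 ∈ J := fun i =>
    single_le_sum_of_canonicallyOrdered (f := fun i => Ideal.span {1 - single (u i) 1})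
      (mem_univ i) (Ideal.mem_span_singleton_self _)
  have hg : ∀ a, 1 - single a 1 ∈ J := fun a =>
    one_sub_single_mem_of_mem_closure (Set.forall_mem_range.2 hu) (hgen ▸ AddSubgroup.mem_top a)
  have hprod : ∏ j ∈ s, (1 - single (g j) 1) ∈ ∏ _j ∈ s, J :=
    Ideal.prod_mem_prod fun j _ => hg (g j)
  rwa [prod_const, hJ] at hprod

end GroupAlgebra

theorem prime_dvd_sum_neg_one_pow_card {G κ : Type*} [AddCommGroup G] [Finite G] [DecidableEq G]
    [Fintype κ] {p n : ℕ} (hp : p.Prime) (hG : Nat.card G = p ^ n)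
    (hκ : ∀ h : κ → G, ∃ I : Finset κ, I.Nonempty ∧ ∑ j ∈ I, h j = 0) (g : κ → G) (a : G) :
    (p : ℤ) ∣ ∑ I : Finset κ with ∑ j ∈ I, g j = a, (-1) ^ #I := by
  have : Fact p.Prime := ⟨hp⟩
  obtain ⟨ι, _, u, hindep, hgen⟩ := exists_iSupIndep_span_singleton_closure_range_eq_top G
  have hord : ∀ i, ∃ k, addOrderOf (u i) = p ^ k := fun i =>
    let ⟨k, _, hk⟩ := (Nat.dvd_prime_pow hp).1 (hG ▸ addOrderOf_dvd_natCard (u i))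
    ⟨k, hk⟩
  have hprod : ∏ j, (1 - AddMonoidAlgebra.single (g j) (1 : ZMod p)) = 0 :=
    prod_one_sub_single_eq_zero_of_closure_eq_top hord hgen
      (sum_addOrderOf_sub_one_lt_card_of_iSupIndep hindep hκ) g
  have hcoeff := coeff_prod_one_sub_single (R := ZMod p) univ g a
  rw [hprod, AddMonoidAlgebra.coeff_zero, Finsupp.zero_apply, powerset_univ] at hcoeff
  rw [← ZMod.intCast_zmod_eq_zero_iff_dvd]
  exact_mod_cast hcoeff.symm

/-- Proposition 5.5.8: for a finite abelian `p`-group `G` and a sequence `g` of length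
`ℓ ≥ D(G)`, the alternating sum `∑ (-1)^i N^i(g)` of the counts of zero-sum subsets of
each size is divisible by `p`. -/
theorem stmt_11 (p : ℕ) (hp : p.Prime) (G : Type*) [AddCommGroup G] [Fintype G]
    [DecidableEq G] (hpG : ∃ n : ℕ, Fintype.card G = p ^ n)
    (ℓ : ℕ) (hℓ : 1 ≤ ℓ) (g : Fin ℓ → G)
    (hD : ∀ h : Fin ℓ → G, ∃ I : Finset (Fin ℓ), I.Nonempty ∧ ∑ j ∈ I, h j = 0) :
    (p : ℤ) ∣ ∑ i ∈ Finset.range (ℓ + 1), (-1 : ℤ) ^ i *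
      ((Finset.univ.filter (fun I : Finset (Fin ℓ) =>
        I.card = i ∧ ∑ j ∈ I, g j = 0)).card : ℤ) := by
  obtain ⟨n, hn⟩ := hpG
  have hcount := sum_range_mul_card_filter_card_eq (fun I => ∑ j ∈ I, g j = 0)
    (fun i => (-1 : ℤ) ^ i)
  rw [Fintype.card_fin] at hcount
  rw [hcount]
  exact prime_dvd_sum_neg_one_pow_card hp (Nat.card_eq_fintype_card.trans hn) hD g 0
end

section
/- Let n ≥ 4 be an integer, let k be an integer with 2 ≤ k ≤ n−2, let G = (ℤ/nℤ) ⊕ (ℤ/nℤ), let (e₁,e₂) be a basis of G, and let S = e₁^[n−1] · ∏_{i=1}^{n+k−1}(x_i·e₁ + e₂), where x₁,…,x_{n+k−1} ∈ ℤ/nℤ and ∑_{i=1}^{n} x_i = 1 in ℤ/nℤ. If S has no nonempty zero-sum subsequence of length at most 2n−1−k, then there exists x ∈ ℤ/nℤ such that, setting f₂ = x·e₁ + e₂, the pair (e₁,f₂) is a basis of G and S = e₁^[n−1] · f₂^[n−1] · (e₁+f₂)^[k]. -/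
/-!
Write `X` for the sequence of the coefficients `xᵢ`. Adding to the image of an `n`-term subsequence
of `X` as many copies of `e₁` as are needed to make the sum vanish shows that every `n`-term
subsequence of `X` has its sum in the short interval `{1, …, k}`.

After a translation, `0` is a term of `X` of maximal multiplicity. A maximal subsequence `N` of `X`
that has zero-sum subsequences of every length up to its own leaves no short zero-sum subsequence in
`U = X - N`, so that `U` has fewer than `n` terms by the Kemperman–Scherk theorem. Complementing
inside `U` and padding from `N`, all sums of at most `k - 1` terms of `U` lie in one interval with
`k` elements, which does not contain the sum of `U`. For any two terms `u, w` of `U`, greedily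
growing subsequence sums in the rest of `U` gives a set `C` with at least `k - 1` elements such that
`C`, `C + u` and `C + w` all lie in that interval; this forces `u = w = ±1`. Hence some value has
multiplicity at least `k` in `X`; running the argument again with `N` the copies of that value
determines `X`.
-/

open scoped Pointwise

section KempermanScherk

variable {G : Type*} [AddCommGroup G] [DecidableEq G]

/-- The **Kemperman–Scherk theorem** for a sum with a unique representation. -/
theorem card_add_card_le_card_add_succ_of_uniqueAdd {A B : Finset G} {a₀ b₀ : G}
    (ha₀ : a₀ ∈ A) (hb₀ : b₀ ∈ B) (hu : UniqueAdd A B a₀ b₀) :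
    A.card + B.card ≤ (A + B).card + 1 := by
  induction hm : B.card using Nat.strong_induction_on generalizing A B with
  | _ m ih =>
  subst hm
  by_cases hstable : ∀ a ∈ A, ∀ b ∈ B, a - b₀ + b ∈ A
  · have hB : B = {b₀} := by
      refine Finset.eq_singleton_iff_unique_mem.2 ⟨hb₀, fun b hb ↦ ?_⟩
      have himage : A.image (· + (b - b₀)) = A := by
        refine Finset.eq_of_subset_of_card_le (Finset.image_subset_iff.2 fun a ha ↦ ?_)
          (Finset.card_image_of_injective _ (add_left_injective _)).ge
        convert hstable a ha b hb using 1
        abel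
      obtain ⟨a, ha, hab⟩ := Finset.mem_image.1 (himage.symm ▸ ha₀)
      refine (hu ha hb ?_).2
      rw [← hab]
      abel
    simp [hB]
  · push Not at hstable
    obtain ⟨a, ha, b, hb, hab⟩ := hstable
    set e := a - b₀ with he
    set P := Finset.addDysonETransform e (A, B)
    have mem_right {c : G} : c ∈ P.2 ↔ c ∈ B ∧ e + c ∈ A := by
      simp [P, Finset.mem_neg_vadd_finset_iff]
    have hlt : P.2.card < B.card :=
      Finset.card_lt_card ⟨Finset.inter_subset_left, fun h ↦ hab (mem_right.1 (h hb)).2⟩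
    have hunique : UniqueAdd P.1 P.2 a₀ b₀ := by
      intro c d hc hd hcd
      obtain ⟨hdB, hdA⟩ := mem_right.1 hd
      rcases Finset.mem_union.1 hc with hc | hc
      · exact hu hc hdB hcd
      · obtain ⟨c, hcB, rfl⟩ := Finset.mem_vadd_finset.1 hc
        rw [vadd_eq_add] at hcd ⊢
        obtain ⟨hed, rfl⟩ := hu hdA hcB (by rw [← hcd]; abel)
        obtain ⟨rfl, rfl⟩ := hu ha hdB (by rw [← hed, he]; abel)
        simp [he]
    have hcard : P.1.card + P.2.card = A.card + B.card := Finset.addDysonETransform.card e (A, B)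
    have hsub : (P.1 + P.2).card ≤ (A + B).card :=
      Finset.card_le_card (Finset.addDysonETransform.subset e (A, B))
    have hP : P.1.card + P.2.card ≤ (P.1 + P.2).card + 1 := ih _ hlt (Finset.mem_union_left _ ha₀)
      (mem_right.2 ⟨hb₀, by simpa [he] using ha⟩) hunique rfl
    omega

end KempermanScherk

section ShortSums

theorem cons_le_of_le_sub_dedup {α : Type*} [DecidableEq α] {a : α} {Y T : Multiset α}
    (ha : a ∈ T) (hY : Y ≤ T - T.dedup) : a ::ₘ Y ≤ T := by
  have := add_le_add (Multiset.singleton_le.2 (Multiset.mem_dedup.2 ha)) hY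
  rwa [Multiset.singleton_add, add_tsub_cancel_of_le (Multiset.dedup_le T)] at this

variable {G : Type*} [AddCommGroup G]

/-- A sequence without nonempty zero-sum subsequences of length at most `m`. -/
def ShortZeroSumFree (m : ℕ) (T : Multiset G) : Prop :=
  ∀ Y ≤ T, Y ≠ 0 → Multiset.card Y ≤ m → Y.sum ≠ 0

theorem ShortZeroSumFree.mono {m m' : ℕ} {T T' : Multiset G} (h : ShortZeroSumFree m T)
    (hm : m' ≤ m) (hT : T' ≤ T) : ShortZeroSumFree m' T' :=
  fun Y hY hY0 hYm ↦ h Y (hY.trans hT) hY0 (hYm.trans hm)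

theorem ShortZeroSumFree.zero_notMem {m : ℕ} {T : Multiset G} (h : ShortZeroSumFree (m + 1) T) :
    (0 : G) ∉ T :=
  fun h0 ↦ h {0} (Multiset.singleton_le.2 h0) (by simp) (by simp) (by simp)

variable [DecidableEq G]

/-- The set of the sums of the subsequences of `T` of length at most `m`; the empty subsequence is
allowed. -/
def shortSums (m : ℕ) (T : Multiset G) : Finset G :=
  ((T.powerset.filter (Multiset.card · ≤ m)).map Multiset.sum).toFinset

theorem mem_shortSums {m : ℕ} {T : Multiset G} {z : G} :
    z ∈ shortSums m T ↔ ∃ Y ≤ T, Multiset.card Y ≤ m ∧ Y.sum = z := by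
  simp [shortSums, and_assoc]

theorem mem_shortSums_card {T : Multiset G} {z : G} :
    z ∈ shortSums (Multiset.card T) T ↔ ∃ Y ≤ T, Y.sum = z := by
  rw [mem_shortSums]
  exact ⟨fun ⟨Y, hY, _, hz⟩ ↦ ⟨Y, hY, hz⟩, fun ⟨Y, hY, hz⟩ ↦ ⟨Y, hY, Multiset.card_le_card hY, hz⟩⟩

theorem zero_mem_shortSums (m : ℕ) (T : Multiset G) : 0 ∈ shortSums m T :=
  mem_shortSums.2 ⟨0, Multiset.zero_le T, by simp⟩

theorem insert_zero_add_shortSums_subset (m : ℕ) (T : Multiset G) :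
    insert 0 T.toFinset + shortSums m (T - T.dedup) ⊆ shortSums (m + 1) T := by
  intro z hz
  obtain ⟨a, ha, b, hb, rfl⟩ := Finset.mem_add.1 hz
  obtain ⟨Y, hY, hYm, rfl⟩ := mem_shortSums.1 hb
  rcases Finset.mem_insert.1 ha with rfl | ha
  · exact mem_shortSums.2 ⟨Y, hY.trans (Multiset.sub_le_self _ _), by omega, by simp⟩
  · exact mem_shortSums.2 ⟨a ::ₘ Y, cons_le_of_le_sub_dedup (Multiset.mem_toFinset.1 ha) hY,
      by simpa using hYm, by simp⟩

theorem ShortZeroSumFree.uniqueAdd {m : ℕ} {T : Multiset G} (h : ShortZeroSumFree (m + 1) T) :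
    UniqueAdd (insert 0 T.toFinset) (shortSums m (T - T.dedup)) 0 0 := by
  intro a b ha hb hab
  rw [add_zero] at hab
  rcases Finset.mem_insert.1 ha with rfl | ha
  · exact ⟨rfl, by simpa using hab⟩
  · obtain ⟨Y, hY, hYm, rfl⟩ := mem_shortSums.1 hb
    exact absurd (by simpa using hab) <|
      h (a ::ₘ Y) (cons_le_of_le_sub_dedup (Multiset.mem_toFinset.1 ha) hY) (by simp)
        (by simpa using hYm)

theorem ShortZeroSumFree.card_lt_card_shortSums {m : ℕ} {T : Multiset G}
    (h : ShortZeroSumFree m T) (hcount : ∀ g, T.count g ≤ m) :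
    Multiset.card T < (shortSums m T).card := by
  induction m generalizing T with
  | zero =>
    have hT : T = 0 := Multiset.eq_zero_of_forall_notMem fun g ↦
      Multiset.count_eq_zero.1 (Nat.le_zero.1 (hcount g))
    simpa [hT] using Finset.card_pos.2 ⟨_, zero_mem_shortSums 0 (0 : Multiset G)⟩
  | succ m ih =>
    have hcount' (g : G) : (T - T.dedup).count g ≤ m := by
      have := hcount g
      rw [Multiset.count_sub, Multiset.count_dedup]
      split_ifs with hg
      · omega
      · simp [Multiset.count_eq_zero_of_notMem hg]
    have hrest := ih (h.mono m.le_succ (Multiset.sub_le_self T T.dedup)) hcount'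
    have hscherk := card_add_card_le_card_add_succ_of_uniqueAdd (Finset.mem_insert_self 0 _)
      (zero_mem_shortSums m _) h.uniqueAdd
    have hsub := Finset.card_le_card (insert_zero_add_shortSums_subset m T)
    have hdedup := Multiset.card_sub (Multiset.dedup_le T)
    have hdedup_le := Multiset.card_le_card (Multiset.dedup_le T)
    rw [Finset.card_insert_of_notMem (by simpa using h.zero_notMem), Multiset.card_toFinset]
      at hscherk
    omega

end ShortSums

section Greedy

theorem add_sum_mem_of_forall_add_mem {G : Type*} [AddCommMonoid G] {C : Set G} {R : Multiset G}
    (hR : ∀ a ∈ R, ∀ z ∈ C, z + a ∈ C) {z : G} (hz : z ∈ C) : z + R.sum ∈ C := by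
  induction R using Multiset.induction generalizing z with
  | empty => simpa using hz
  | cons a R ih =>
    rw [Multiset.sum_cons, ← add_assoc]
    exact ih (fun b hb ↦ hR b (Multiset.mem_cons_of_mem hb))
      (hR a (Multiset.mem_cons_self a R) z hz)

variable {G : Type*} [AddCommGroup G] [DecidableEq G]

theorem card_shortSums_lt_card_shortSums_cons {M : Multiset G} {a z : G}
    (hz : z ∈ shortSums (Multiset.card M) M) (hza : z + a ∉ shortSums (Multiset.card M) M) :
    (shortSums (Multiset.card M) M).card
      < (shortSums (Multiset.card (a ::ₘ M)) (a ::ₘ M)).card := by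
  refine Finset.card_lt_card ⟨fun y hy ↦ ?_, fun hsub ↦ hza (hsub ?_)⟩
  · obtain ⟨R, hR, rfl⟩ := mem_shortSums_card.1 hy
    exact mem_shortSums_card.2 ⟨R, hR.trans (Multiset.le_cons_self M a), rfl⟩
  · obtain ⟨R, hR, rfl⟩ := mem_shortSums_card.1 hz
    exact mem_shortSums_card.2 ⟨a ::ₘ R, (Multiset.cons_le_cons_iff a).2 hR, by simp [add_comm]⟩

theorem exists_card_eq_lt_card_shortSums {m : ℕ} {V : Multiset G}
    (hV : ∀ R ≤ V, Multiset.card R < m → R.sum ≠ V.sum) :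
    ∃ M ≤ V, Multiset.card M = m ∧ m < (shortSums m M).card := by
  induction m with
  | zero => exact ⟨0, Multiset.zero_le V, rfl, Finset.card_pos.2 ⟨0, zero_mem_shortSums 0 0⟩⟩
  | succ m ih =>
    obtain ⟨M, hM, rfl, hcard⟩ := ih fun R hR hRm ↦ hV R hR (by omega)
    obtain ⟨a, ha, z, hz, hza⟩ : ∃ a ∈ V - M, ∃ z ∈ shortSums (Multiset.card M) M,
        z + a ∉ shortSums (Multiset.card M) M := by
      by_contra! hclosed
      have hsum : M.sum + (V - M).sum ∈ shortSums (Multiset.card M) M :=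
        add_sum_mem_of_forall_add_mem hclosed (mem_shortSums_card.2 ⟨M, le_rfl, rfl⟩)
      rw [← Multiset.sum_add, add_tsub_cancel_of_le hM] at hsum
      obtain ⟨R, hR, hRcard, hRsum⟩ := mem_shortSums.1 hsum
      exact hV R (hR.trans hM) (by omega) hRsum
    refine ⟨a ::ₘ M, ?_, Multiset.card_cons a M, ?_⟩
    · have := add_le_add_left (Multiset.singleton_le.2 ha) M
      rwa [Multiset.singleton_add, tsub_add_cancel_of_le hM] at this
    · have := card_shortSums_lt_card_shortSums_cons hz hza
      rw [Multiset.card_cons] at this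
      omega

end Greedy

section ZeroSumComplete

variable {G : Type*} [AddCommGroup G]

/-- A sequence having a zero-sum subsequence of every length up to its own. -/
def ZeroSumComplete (N : Multiset G) : Prop :=
  ∀ s ≤ Multiset.card N, ∃ Z ≤ N, Multiset.card Z = s ∧ Z.sum = 0

theorem zeroSumComplete_replicate_zero (v : ℕ) :
    ZeroSumComplete (Multiset.replicate v (0 : G)) := by
  intro s hs
  rw [Multiset.card_replicate] at hs
  exact ⟨Multiset.replicate s 0, (Multiset.replicate_le_replicate 0).2 hs, by simp, by simp⟩

theorem ZeroSumComplete.add {N Y : Multiset G} (hN : ZeroSumComplete N) (hY : Y.sum = 0)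
    (hcard : Multiset.card Y ≤ Multiset.card N + 1) : ZeroSumComplete (N + Y) := by
  intro s hs
  rw [Multiset.card_add] at hs
  by_cases hsN : s ≤ Multiset.card N
  · obtain ⟨Z, hZ, hZs⟩ := hN s hsN
    exact ⟨Z, hZ.trans (Multiset.le_add_right N Y), hZs⟩
  · obtain ⟨Z, hZ, hZcard, hZsum⟩ := hN (s - Multiset.card Y) (by omega)
    refine ⟨Z + Y, add_le_add_left hZ Y, ?_, by simp [hZsum, hY]⟩
    rw [Multiset.card_add]
    omega

theorem exists_zeroSumComplete_le [DecidableEq G] (X : Multiset G) :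
    ∃ N ≤ X, ZeroSumComplete N ∧ ShortZeroSumFree (Multiset.card N + 1) (X - N) := by
  obtain ⟨N, ⟨hN, hcomplete⟩, hmax⟩ :=
    ((Set.finite_Iic X).subset (Set.sep_subset (Set.Iic X) ZeroSumComplete)).exists_maximal
      ⟨0, Multiset.zero_le X, zeroSumComplete_replicate_zero 0⟩
  refine ⟨N, hN, hcomplete, fun Y hY hY0 hYcard hYsum ↦ hY0 ?_⟩
  have hNY : N + Y ≤ X := (add_le_add_right hY N).trans_eq (add_tsub_cancel_of_le hN)
  have hle := hmax ⟨hNY, hcomplete.add hYsum hYcard⟩ (Multiset.le_add_right N Y)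
  simpa using Multiset.card_le_card hle

end ZeroSumComplete

section Arc

variable {n k : ℕ} {b : ZMod n}

/-- The cyclic interval `{b, b + 1, …, b + (k - 1)}` in `ℤ/nℤ`. -/
def arc (b : ZMod n) (k : ℕ) : Finset (ZMod n) :=
  (Finset.range k).image fun j : ℕ ↦ b + j

theorem mem_arc {z : ZMod n} : z ∈ arc b k ↔ ∃ j < k, b + (j : ZMod n) = z := by
  simp [arc]

theorem add_natCast_mem_arc {j : ℕ} (hj : j < n) (hk : k ≤ n) :
    b + (j : ZMod n) ∈ arc b k ↔ j < k := by
  refine ⟨fun h ↦ ?_, fun h ↦ mem_arc.2 ⟨j, h, rfl⟩⟩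
  obtain ⟨i, hi, hij⟩ := mem_arc.1 h
  have : i = j := CharP.natCast_injOn_Iio (ZMod n) n (hi.trans_le hk) hj (add_left_cancel hij)
  omega

theorem natCast_mem_arc_one {j : ℕ} (hj : j < n) (hk : k < n) :
    (j : ZMod n) ∈ arc 1 k ↔ 1 ≤ j ∧ j ≤ k := by
  rcases j with _ | j
  · have hlast : ((0 : ℕ) : ZMod n) = 1 + ((n - 1 : ℕ) : ZMod n) := by
      rw [Nat.cast_sub (by omega)]
      simp
    rw [hlast, add_natCast_mem_arc (by omega) hk.le]
    omega
  · rw [Nat.cast_succ, add_comm, add_natCast_mem_arc (by omega) hk.le]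
    omega

theorem sub_mem_arc {s z : ZMod n} (hz : z ∈ arc 1 k) : s - z ∈ arc (s - (k : ZMod n)) k := by
  obtain ⟨j, hj, rfl⟩ := mem_arc.1 hz
  refine mem_arc.2 ⟨k - 1 - j, by omega, ?_⟩
  rw [Nat.cast_sub (by omega), Nat.cast_sub (by omega), Nat.cast_one]
  abel

theorem self_notMem_arc_sub (hk : k < n) {s : ZMod n} : s ∉ arc (s - (k : ZMod n)) k := by
  have := (add_natCast_mem_arc (b := s - (k : ZMod n)) hk hk.le).not.2 (lt_irrefl k)
  rwa [sub_add_cancel] at this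

theorem eq_of_notMem_of_subset_arc {C : Finset (ZMod n)} (hC : C ⊆ arc b k)
    (hcard : k ≤ C.card + 1) {i j : ℕ} (hi : i < k) (hj : j < k)
    (hiC : b + (i : ZMod n) ∉ C) (hjC : b + (j : ZMod n) ∉ C) : i = j := by
  by_contra hij
  have hsub : C ⊆ (((Finset.range k).erase i).erase j).image fun l : ℕ ↦ b + (l : ZMod n) := by
    intro z hz
    obtain ⟨l, hl, rfl⟩ := mem_arc.1 (hC hz)
    have hli : l ≠ i := fun h ↦ hiC (h ▸ hz)
    have hlj : l ≠ j := fun h ↦ hjC (h ▸ hz)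
    exact Finset.mem_image_of_mem _ (by simp [hli, hlj, hl])
  have hle := (Finset.card_le_card hsub).trans Finset.card_image_le
  rw [Finset.card_erase_of_mem (by simp [Ne.symm hij, hj]),
    Finset.card_erase_of_mem (by simpa using hi), Finset.card_range] at hle
  omega

theorem eq_one_or_eq_neg_one_of_add_subset_arc (hk : 2 ≤ k) (hkn : k + 2 ≤ n)
    {C : Finset (ZMod n)} (hC : C ⊆ arc b k) (hcard : k ≤ C.card + 1) {u : ZMod n} (hu : u ≠ 0)
    (hCu : ∀ z ∈ C, z + u ∈ arc b k) :
    u = 1 ∧ b + ((k - 1 : ℕ) : ZMod n) ∉ C ∨ u = -1 ∧ b + ((0 : ℕ) : ZMod n) ∉ C := by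
  have : NeZero n := ⟨by omega⟩
  obtain ⟨w, hwn, rfl⟩ : ∃ w < n, (w : ZMod n) = u := ⟨u.val, u.val_lt, u.natCast_zmod_val⟩
  have hw : w ≠ 0 := by rintro rfl; simp at hu
  have notMem_of_exits {j : ℕ} (hj : k ≤ j + w) (hj' : j + w < n) : b + (j : ZMod n) ∉ C := by
    intro h
    have := hCu _ h
    rw [add_assoc, ← Nat.cast_add, add_natCast_mem_arc hj' (by omega)] at this
    omega
  by_cases hwk : k - 1 + w < n
  · have hlast := notMem_of_exits (j := k - 1) (by omega) hwk
    have hw1 : w = 1 := by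
      by_contra hw1
      have := eq_of_notMem_of_subset_arc hC hcard (by omega) (by omega) hlast
        (notMem_of_exits (j := k - 2) (by omega) (by omega))
      omega
    exact Or.inl ⟨by simp [hw1], hlast⟩
  · have hw1 : w = n - 1 := by
      by_contra hw1
      have := eq_of_notMem_of_subset_arc hC hcard (by omega) (by omega)
        (notMem_of_exits (j := n - 1 - w) (by omega) (by omega))
        (notMem_of_exits (j := n - 2 - w) (by omega) (by omega))
      omega
    refine Or.inr ⟨?_, notMem_of_exits (by omega) (by omega)⟩
    rw [hw1, Nat.cast_sub (by omega)]
    simp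

theorem eq_and_eq_one_or_neg_one_of_add_subset_arc (hk : 2 ≤ k) (hkn : k + 2 ≤ n)
    {C : Finset (ZMod n)} (hC : C ⊆ arc b k) (hcard : k ≤ C.card + 1) {u w : ZMod n}
    (hu : u ≠ 0) (hw : w ≠ 0) (hCu : ∀ z ∈ C, z + u ∈ arc b k) (hCw : ∀ z ∈ C, z + w ∈ arc b k) :
    u = w ∧ (u = 1 ∨ u = -1) := by
  have hends (hlast : b + ((k - 1 : ℕ) : ZMod n) ∉ C) (hfirst : b + ((0 : ℕ) : ZMod n) ∉ C) :
      False := by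
    have := eq_of_notMem_of_subset_arc hC hcard (by omega) (by omega) hlast hfirst
    omega
  rcases eq_one_or_eq_neg_one_of_add_subset_arc hk hkn hC hcard hu hCu with
      ⟨rfl, huC⟩ | ⟨rfl, huC⟩ <;>
    rcases eq_one_or_eq_neg_one_of_add_subset_arc hk hkn hC hcard hw hCw with
      ⟨rfl, hwC⟩ | ⟨rfl, hwC⟩
  · exact ⟨rfl, Or.inl rfl⟩
  · exact (hends huC hwC).elim
  · exact (hends hwC huC).elim
  · exact ⟨rfl, Or.inr rfl⟩

theorem eq_and_eq_one_or_neg_one_of_pair_le (hk : 2 ≤ k) (hkn : k + 2 ≤ n)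
    {U : Multiset (ZMod n)} (h0 : (0 : ZMod n) ∉ U)
    (hU : ∀ R ≤ U, Multiset.card R < k → R.sum ∈ arc b k) (hsum : U.sum ∉ arc b k)
    {u w : ZMod n} (huw : {u, w} ≤ U) : u = w ∧ (u = 1 ∨ u = -1) := by
  have add_le {R P : Multiset (ZMod n)} (hR : R ≤ U - {u, w}) (hP : P ≤ {u, w}) : R + P ≤ U :=
    (add_le_add hR hP).trans_eq (tsub_add_cancel_of_le huw)
  obtain ⟨M, hM, -, hgrow⟩ :
      ∃ M ≤ U - {u, w}, Multiset.card M = k - 2 ∧ k - 2 < (shortSums (k - 2) M).card := by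
    refine exists_card_eq_lt_card_shortSums fun R hR hRcard hRsum ↦ hsum ?_
    have := hU _ (add_le hR le_rfl) (by rw [Multiset.card_add, Multiset.card_pair]; omega)
    rwa [Multiset.sum_add, hRsum, ← Multiset.sum_add, tsub_add_cancel_of_le huw] at this
  have shift_mem {P : Multiset (ZMod n)} (hP : P ≤ {u, w}) (hPcard : Multiset.card P ≤ 1) :
      ∀ z ∈ shortSums (k - 2) M, z + P.sum ∈ arc b k := by
    intro z hz
    obtain ⟨R, hR, hRcard, rfl⟩ := mem_shortSums.1 hz
    rw [← Multiset.sum_add]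
    exact hU _ (add_le (hR.trans hM) hP) (by rw [Multiset.card_add]; omega)
  refine eq_and_eq_one_or_neg_one_of_add_subset_arc hk hkn
    (b := b) (C := shortSums (k - 2) M) (fun z hz ↦ ?_) (by omega)
    (ne_of_mem_of_not_mem (Multiset.mem_of_le huw (by simp)) h0)
    (ne_of_mem_of_not_mem (Multiset.mem_of_le huw (by simp)) h0) (fun z hz ↦ ?_) (fun z hz ↦ ?_)
  · simpa using shift_mem (Multiset.zero_le _) (by simp) z hz
  · simpa using shift_mem (P := {u}) (by simp) (by simp) z hz
  · simpa using shift_mem (P := {w}) (by simp) (by simp) z hz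

theorem exists_eq_replicate_of_forall_sum_mem_arc (hk : 2 ≤ k) (hkn : k + 2 ≤ n)
    {U : Multiset (ZMod n)} (hcard : 2 ≤ Multiset.card U) (h0 : (0 : ZMod n) ∉ U)
    (hU : ∀ R ≤ U, Multiset.card R < k → R.sum ∈ arc b k) (hsum : U.sum ∉ arc b k) :
    ∃ ε : ZMod n, (ε = 1 ∨ ε = -1) ∧ U = Multiset.replicate (Multiset.card U) ε := by
  have pair {u w : ZMod n} (huw : {u, w} ≤ U) : u = w ∧ (u = 1 ∨ u = -1) :=
    eq_and_eq_one_or_neg_one_of_pair_le hk hkn h0 hU hsum huw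
  obtain ⟨a, ha⟩ := Multiset.card_pos_iff_exists_mem.1 (by omega : 0 < Multiset.card U)
  obtain ⟨V, rfl⟩ := Multiset.exists_cons_of_mem ha
  have pair_le {w : ZMod n} (hw : w ∈ V) : {a, w} ≤ a ::ₘ V :=
    (Multiset.cons_le_cons_iff a).2 (Multiset.singleton_le.2 hw)
  rw [Multiset.card_cons] at hcard
  obtain ⟨w, hw⟩ := Multiset.card_pos_iff_exists_mem.1 (by omega : 0 < Multiset.card V)
  refine ⟨a, (pair (pair_le hw)).2, Multiset.eq_replicate_card.2 fun v hv ↦ ?_⟩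
  rcases Multiset.mem_cons.1 hv with rfl | hv
  · rfl
  · exact (pair (pair_le hv)).1.symm

end Arc

section SumsInArc

variable {n k : ℕ}

/-- Every subsequence of length `n` of `X` has its sum in `{1, …, k}`. -/
def SumsInArc (k : ℕ) (X : Multiset (ZMod n)) : Prop :=
  ∀ I ≤ X, Multiset.card I = n → I.sum ∈ arc 1 k

theorem SumsInArc.map_add {X : Multiset (ZMod n)} (h : SumsInArc k X) (g : ZMod n) :
    SumsInArc k (X.map (· + g)) := by
  intro I hI hcard
  have hIX : I.map (· - g) ≤ X := by
    simpa [Multiset.map_map] using Multiset.map_le_map (f := (· - g)) hI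
  simpa [Multiset.sum_map_sub, hcard] using h _ hIX (by simpa using hcard)

theorem SumsInArc.card_lt_of_zeroSumComplete (hkn : k < n) {N X : Multiset (ZMod n)}
    (h : SumsInArc k X) (hNX : N ≤ X) (hN : ZeroSumComplete N) : Multiset.card N < n := by
  by_contra! hnN
  obtain ⟨Z, hZ, hZcard, hZsum⟩ := hN n hnN
  have hmem := h Z (hZ.trans hNX) hZcard
  rw [hZsum, ← Nat.cast_zero, natCast_mem_arc_one (by omega) hkn] at hmem
  omega

theorem SumsInArc.exists_eq_replicate (hk : 2 ≤ k) (hkn : k + 2 ≤ n) {N U : Multiset (ZMod n)}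
    (h : SumsInArc k (N + U)) (hcard : Multiset.card (N + U) = n + k - 1)
    (hN : ZeroSumComplete N) (hkN : k ≤ Multiset.card N) (h0 : (0 : ZMod n) ∉ U) :
    ∃ ε : ZMod n, (ε = 1 ∨ ε = -1) ∧ U = Multiset.replicate (Multiset.card U) ε := by
  have hNn := h.card_lt_of_zeroSumComplete (by omega) (Multiset.le_add_right N U) hN
  rw [Multiset.card_add] at hcard
  refine exists_eq_replicate_of_forall_sum_mem_arc hk hkn (by omega) h0 (fun R hR hRk ↦ ?_)
    (self_notMem_arc_sub (by omega))
  have hcompl := Multiset.card_sub hR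
  have hRU := Multiset.card_le_card hR
  obtain ⟨Z, hZ, hZcard, hZsum⟩ := hN (n - Multiset.card (U - R)) (by omega)
  have hmem : (Z + (U - R)).sum ∈ arc 1 k :=
    h _ (add_le_add hZ (Multiset.sub_le_self U R)) (by rw [Multiset.card_add]; omega)
  have hRsum : U.sum - (U - R).sum = R.sum :=
    sub_eq_of_eq_add (by rw [← Multiset.sum_add, add_tsub_cancel_of_le hR])
  rw [Multiset.sum_add, hZsum, zero_add] at hmem
  exact hRsum ▸ sub_mem_arc hmem

theorem SumsInArc.le_count_zero (hk : 2 ≤ k) (hkn : k + 2 ≤ n) {X : Multiset (ZMod n)}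
    (h : SumsInArc k X) (hcard : Multiset.card X = n + k - 1)
    (hmax : ∀ g, X.count g ≤ X.count 0) : k ≤ X.count 0 := by
  have : NeZero n := ⟨by omega⟩
  obtain ⟨N, hN, hcomplete, hfree⟩ := exists_zeroSumComplete_le X
  obtain ⟨U, rfl⟩ := Multiset.le_iff_exists_add.1 hN
  rw [add_tsub_cancel_left] at hfree
  have h0 : (0 : ZMod n) ∉ U := hfree.zero_notMem
  have hcount0 : (N + U).count 0 ≤ Multiset.card N := by
    simpa [Multiset.count_eq_zero_of_notMem h0] using Multiset.count_le_card 0 N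
  have hUn : Multiset.card U < n := by
    have hlt := (hfree.mono (hcount0.trans (Nat.le_succ _)) le_rfl).card_lt_card_shortSums fun g ↦
      (Multiset.count_le_of_le g (Multiset.le_add_left U N)).trans (hmax g)
    exact hlt.trans_le ((Finset.card_le_univ _).trans_eq (ZMod.card n))
  have hNn := h.card_lt_of_zeroSumComplete (by omega) hN hcomplete
  have hcard_add := Multiset.card_add N U
  obtain ⟨ε, -, hU⟩ := h.exists_eq_replicate hk hkn hcard hcomplete (by omega) h0
  calc k ≤ Multiset.card U := by omega
    _ = U.count ε := by conv_rhs => rw [hU, Multiset.count_replicate_self]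
    _ ≤ (N + U).count ε := Multiset.count_le_of_le ε (Multiset.le_add_left U N)
    _ ≤ (N + U).count 0 := hmax ε

theorem SumsInArc.exists_eq_replicate_of_le_count_zero (hk : 2 ≤ k) (hkn : k + 2 ≤ n)
    {X : Multiset (ZMod n)} (h : SumsInArc k X) (hcard : Multiset.card X = n + k - 1)
    (hk0 : k ≤ X.count 0) :
    ∃ x₀ : ZMod n, X = Multiset.replicate (n - 1) x₀ + Multiset.replicate k (x₀ + 1) := by
  generalize hv : X.count 0 = v at hk0
  obtain ⟨U, hX, h0⟩ : ∃ U, X = Multiset.replicate v 0 + U ∧ (0 : ZMod n) ∉ U :=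
    ⟨X.filter (· ≠ 0), by rw [← hv, ← Multiset.filter_eq', Multiset.filter_add_not], by simp⟩
  subst hX
  have hvn := h.card_lt_of_zeroSumComplete (by omega) (Multiset.le_add_right _ U)
    (zeroSumComplete_replicate_zero v)
  obtain ⟨ε, hε, hU⟩ := h.exists_eq_replicate hk hkn hcard (zeroSumComplete_replicate_zero v)
    (by simpa using hk0) h0
  rw [Multiset.card_add, Multiset.card_replicate] at hcard
  rw [Multiset.card_replicate] at hvn
  have mul_mem {j : ℕ} (hj : j ≤ Multiset.card U) (hjn : j ≤ n) (hjv : n - j ≤ v) :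
      (j : ZMod n) * ε ∈ arc 1 k := by
    have hle : Multiset.replicate (n - j) 0 + Multiset.replicate j ε ≤ Multiset.replicate v 0 + U :=
      add_le_add ((Multiset.replicate_le_replicate 0).2 hjv)
        (((Multiset.replicate_le_replicate ε).2 hj).trans_eq hU.symm)
    simpa using h _ hle (by simp only [Multiset.card_add, Multiset.card_replicate]; omega)
  rcases hε with rfl | rfl
  · have hmem := mul_mem (j := Multiset.card U) le_rfl (by omega) (by omega)
    rw [mul_one, natCast_mem_arc_one (by omega) (by omega)] at hmem
    refine ⟨0, ?_⟩
    rw [hU, zero_add, show v = n - 1 by omega, show Multiset.card U = k by omega]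
  · have hmem := mul_mem (j := n - v) (by omega) (by omega) (by omega)
    rw [Nat.cast_sub hvn.le, ZMod.natCast_self, zero_sub, neg_mul_neg, mul_one,
      natCast_mem_arc_one hvn (by omega)] at hmem
    refine ⟨-1, ?_⟩
    rw [hU, neg_add_cancel, add_comm, show v = k by omega, show Multiset.card U = n - 1 by omega]

theorem SumsInArc.exists_eq_replicate_add_replicate (hk : 2 ≤ k) (hkn : k + 2 ≤ n)
    {X : Multiset (ZMod n)} (h : SumsInArc k X) (hcard : Multiset.card X = n + k - 1) :
    ∃ x₀ : ZMod n, X = Multiset.replicate (n - 1) x₀ + Multiset.replicate k (x₀ + 1) := by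
  have : NeZero n := ⟨by omega⟩
  obtain ⟨g, hg⟩ := Finite.exists_max (X.count ·)
  obtain ⟨Y, rfl⟩ : ∃ Y : Multiset (ZMod n), Y.map (· + g) = X := ⟨X.map (· - g), by simp⟩
  have hY : SumsInArc k Y := by simpa using h.map_add (-g)
  have count_map (z : ZMod n) : (Y.map (· + g)).count (z + g) = Y.count z :=
    Multiset.count_map_eq_count' _ _ (add_left_injective g) z
  rw [Multiset.card_map] at hcard
  have hmax (z : ZMod n) : Y.count z ≤ Y.count 0 := by
    simpa [← count_map] using hg (z + g)
  obtain ⟨x₀, rfl⟩ := hY.exists_eq_replicate_of_le_count_zero hk hkn hcard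
    (hY.le_count_zero hk hkn hcard hmax)
  exact ⟨x₀ + g, by simp [add_right_comm]⟩

end SumsInArc

section Module

theorem bijective_smul_add_smul_shear {R M : Type*} [CommRing R] [AddCommGroup M] [Module R M]
    {e₁ e₂ : M} (h : Function.Bijective fun ab : R × R ↦ ab.1 • e₁ + ab.2 • e₂) (c : R) :
    Function.Bijective fun ab : R × R ↦ ab.1 • e₁ + ab.2 • (c • e₁ + e₂) := by
  have hshear : Function.Bijective fun ab : R × R ↦ (ab.1 + ab.2 * c, ab.2) :=
    Function.bijective_iff_has_inverse.2
      ⟨fun ab ↦ (ab.1 - ab.2 * c, ab.2), fun ab ↦ by simp, fun ab ↦ by simp⟩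
  convert h.comp hshear using 2
  simp only [Function.comp_apply]
  module

variable {n k : ℕ} {M : Type*} [AddCommGroup M] [Module (ZMod n) M]

theorem sum_map_smul_add (e₁ e₂ : M) (I : Multiset (ZMod n)) :
    (I.map (fun z ↦ z • e₁ + e₂)).sum = I.sum • e₁ + (Multiset.card I : ZMod n) • e₂ := by
  rw [Multiset.sum_map_add, ← Multiset.sum_smul, Multiset.map_const', Multiset.sum_replicate,
    Nat.cast_smul_eq_nsmul]

theorem sumsInArc_of_shortZeroSumFree [NeZero n] {e₁ e₂ : M} {X : Multiset (ZMod n)}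
    (h : ShortZeroSumFree (2 * n - 1 - k)
      (Multiset.replicate (n - 1) e₁ + X.map fun z ↦ z • e₁ + e₂)) :
    SumsInArc k X := by
  intro I hI hIn
  by_contra hmem
  obtain ⟨m, hmn, hmI⟩ : ∃ m < n, (m : ZMod n) = -I.sum :=
    ⟨_, ZMod.val_lt _, ZMod.natCast_zmod_val _⟩
  have hmk : m + k < n := by
    by_contra! hle
    refine hmem (mem_arc.2 ⟨n - m - 1, by omega, ?_⟩)
    rw [Nat.cast_sub (by omega), Nat.cast_sub hmn.le, hmI]
    simp
  refine h (Multiset.replicate m e₁ + I.map fun z ↦ z • e₁ + e₂) ?_ ?_ ?_ ?_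
  · exact add_le_add ((Multiset.replicate_le_replicate e₁).2 (by omega)) (Multiset.map_le_map hI)
  · rw [← Multiset.card_pos]
    simp [hIn, NeZero.pos n]
  · simp only [Multiset.card_add, Multiset.card_replicate, Multiset.card_map, hIn]
    omega
  · rw [Multiset.sum_add, sum_map_smul_add, hIn, Multiset.sum_replicate,
      ← Nat.cast_smul_eq_nsmul (ZMod n), hmI]
    simp

theorem stmt_14_general (hk : 2 ≤ k) (hkn : k + 2 ≤ n) (e₁ e₂ : M) {X : Multiset (ZMod n)}
    (hcard : Multiset.card X = n + k - 1)
    (hfree : ShortZeroSumFree (2 * n - 1 - k)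
      (Multiset.replicate (n - 1) e₁ + X.map fun z ↦ z • e₁ + e₂)) :
    ∃ x₀ : ZMod n, (Multiset.replicate (n - 1) e₁ + X.map fun z ↦ z • e₁ + e₂) =
      Multiset.replicate (n - 1) e₁ + Multiset.replicate (n - 1) (x₀ • e₁ + e₂) +
        Multiset.replicate k (e₁ + (x₀ • e₁ + e₂)) := by
  have : NeZero n := ⟨by omega⟩
  obtain ⟨x₀, rfl⟩ :=
    (sumsInArc_of_shortZeroSumFree hfree).exists_eq_replicate_add_replicate hk hkn hcard
  refine ⟨x₀, ?_⟩
  rw [Multiset.map_add, Multiset.map_replicate, Multiset.map_replicate, ← add_assoc,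
    show (x₀ + 1) • e₁ + e₂ = e₁ + (x₀ • e₁ + e₂) by module]

end Module

/-- Lemma: if `S = e₁^[n-1] · ∏_{i=1}^{n+k-1}(xᵢe₁+e₂)` with `∑_{i=1}^{n} xᵢ = 1` has no
nonempty zero-sum subsequence of length at most `2n-1-k`, then for some `x`, with
`f₂ = x·e₁+e₂`, the pair `(e₁,f₂)` is a basis and `S = e₁^[n-1] · f₂^[n-1] · (e₁+f₂)^[k]`. -/
theorem stmt_14 (n : ℕ) (hn : 4 ≤ n) (k : ℕ) (hk1 : 2 ≤ k) (hk2 : k ≤ n - 2)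
    (e₁ e₂ : ZMod n × ZMod n)
    (hbasis : Function.Bijective (fun ab : ZMod n × ZMod n => ab.1 • e₁ + ab.2 • e₂))
    (x : Fin (n + k - 1) → ZMod n)
    (hx : ∑ i ∈ Finset.univ.filter (fun i : Fin (n + k - 1) => (i : ℕ) < n), x i = 1)
    (S : Multiset (ZMod n × ZMod n))
    (hS : S = Multiset.replicate (n - 1) e₁ +
        Multiset.map (fun i => x i • e₁ + e₂) (Finset.univ : Finset (Fin (n + k - 1))).val)
    (hzs : ∀ T ≤ S, T ≠ 0 → Multiset.card T ≤ 2 * n - 1 - k → T.sum ≠ 0) :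
    ∃ x₀ : ZMod n,
      Function.Bijective (fun ab : ZMod n × ZMod n => ab.1 • e₁ + ab.2 • (x₀ • e₁ + e₂)) ∧
      S = Multiset.replicate (n - 1) e₁ + Multiset.replicate (n - 1) (x₀ • e₁ + e₂) +
          Multiset.replicate k (e₁ + (x₀ • e₁ + e₂)) := by
  have hS' : S = Multiset.replicate (n - 1) e₁ +
      (Finset.univ.val.map x).map fun z ↦ z • e₁ + e₂ := by rw [hS, Multiset.map_map]; rfl
  subst hS'
  obtain ⟨x₀, hx₀⟩ := stmt_14_general hk1 (by omega) e₁ e₂ (by simp) hzs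
  exact ⟨x₀, bijective_smul_add_smul_shear hbasis x₀, hx₀⟩
end

section
/- Let p be a prime and let k be an integer with 2 ≤ k ≤ p−2. Then every sequence over G = (ℤ/pℤ) ⊕ (ℤ/pℤ) of length 2p−1+k has a nonempty zero-sum subsequence of length at most 2p−1−k; moreover, the sequence e₁^[p−1] · e₂^[p−1] · (e₁+e₂)^[k], for (e₁,e₂) the standard basis of G, has length 2p−2+k and has no nonempty zero-sum subsequence of length at most 2p−1−k. Hence s_{≤ 2p−1−k}(G) = 2p−1+k. -/
/-!
The upper bound is the polynomial method. A polynomial `P` in `n` variables of degree less than `n`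
satisfies `∑ I, (-1) ^ #I * P (1_I) = 0`, the sum being over all subsets `I` of the variables,
because every monomial of `P` misses a variable. So if `P 0 ≠ 0` then `P (1_I) ≠ 0` for some
nonempty `I`. Over `𝔽_q`, Fermat's little theorem expresses that the subsequence indexed by `I` has
sum zero as the nonvanishing at `1_I` of a polynomial of degree `d * (q - 1)`, where `d` is the
dimension, and each residue forbidden to the length of the subsequence costs only one further
degree.

For `d = 2`, `q = p`, a sequence of length `2 * p - 1 + k` therefore has a nonempty zero-sum
subsequence `T` whose length avoids `-1, …, -k` modulo `p`. Either `T` is short enough, or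
`2 * p ≤ |T| ≤ 3 * p - 1 - k`; in the latter case `T` exceeds the Davenport constant `2 * p - 1`,
so it splits into two nonempty zero-sum parts, the shorter of which has length at most
`(3 * p - 1 - k) / 2 ≤ 2 * p - 1 - k`.
-/

open Finset Module MvPolynomial

section IndicatorEvaluation

variable {ι R : Type*} [Fintype ι] [CommRing R]

lemma sum_neg_one_pow_card_mul_prod_indicator_pow (d : ι → ℕ) :
    ∑ I : Finset ι, (-1 : R) ^ #I * ∏ i, (I : Set ι).indicator 1 i ^ d i =
      ∏ i, (-1 + 0 ^ d i) := by
  classical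
  rw [Fintype.prod_add]
  refine Finset.sum_congr rfl fun I _ ↦ ?_
  have hpow (i : ι) :
      (I : Set ι).indicator (1 : ι → R) i ^ d i = if i ∈ I then 1 else 0 ^ d i := by
    by_cases hi : i ∈ I <;> simp [hi]
  simp [hpow, prod_ite, filter_not, compl_eq_univ_sdiff]

lemma sum_neg_one_pow_card_mul_eval_indicator_eq_zero {P : MvPolynomial ι R}
    (hP : P.totalDegree < Fintype.card ι) :
    ∑ I : Finset ι, (-1) ^ #I * eval ((I : Set ι).indicator 1) P = 0 := by
  simp_rw [eval_eq', mul_sum, mul_left_comm _ (coeff _ P)]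
  rw [Finset.sum_comm]
  refine Finset.sum_eq_zero fun d hd ↦ ?_
  obtain ⟨i, hi⟩ := P.exists_degree_lt 1 (by simpa using hP) hd
  rw [← mul_sum, sum_neg_one_pow_card_mul_prod_indicator_pow,
    prod_eq_zero (mem_univ i) (by simp [Nat.lt_one_iff.mp hi]), mul_zero]

lemma exists_nonempty_eval_indicator_ne_zero {P : MvPolynomial ι R}
    (hP : P.totalDegree < Fintype.card ι) (h0 : eval 0 P ≠ 0) :
    ∃ I : Finset ι, I.Nonempty ∧ eval ((I : Set ι).indicator 1) P ≠ 0 := by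
  by_contra! hvanish
  apply h0
  rw [← sum_neg_one_pow_card_mul_eval_indicator_eq_zero hP, Finset.sum_eq_single ∅]
  · simp
  · intro I _ hI
    rw [hvanish I (nonempty_iff_ne_empty.mpr hI), mul_zero]
  · simp

end IndicatorEvaluation

lemma linearCombination_indicator_one {ι R M : Type*} [Fintype ι] [Semiring R] [AddCommMonoid M]
    [Module R M] (g : ι → M) (I : Finset ι) :
    Fintype.linearCombination R g ((I : Set ι).indicator 1) = ∑ i ∈ I, g i := by
  classical
  simp [Fintype.linearCombination_apply, Set.indicator_apply, ite_smul]

lemma exists_totalDegree_le_one_eval_eq {ι R : Type*} [Finite ι] [CommRing R]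
    (f : (ι → R) →ₗ[R] R) :
    ∃ L : MvPolynomial ι R, L.totalDegree ≤ 1 ∧ ∀ x, eval x L = f x := by
  classical
  cases nonempty_fintype ι
  let b := Pi.basisFun R ι
  let u := Basis.singleton Unit R
  refine ⟨f.toMvPolynomial b u (), f.toMvPolynomial_totalDegree_le b u (), fun x ↦ ?_⟩
  have hrepr : ⇑(b.repr x) = x := funext fun i ↦ Pi.basisFun_repr R ι x i
  simpa [hrepr, u] using f.toMvPolynomial_eval_eq_apply b u () (b.repr x)

section FiniteField

variable {F V ι : Type*} [Field F] [AddCommGroup V] [Module F V]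

lemma exists_totalDegree_le_eval_ne_zero_iff_notMem [Finite ι] (w : (ι → F) →ₗ[F] F)
    (A : Finset F) :
    ∃ P : MvPolynomial ι F, P.totalDegree ≤ #A ∧ ∀ x, eval x P ≠ 0 ↔ w x ∉ A := by
  obtain ⟨W, hWdeg, hWeval⟩ := exists_totalDegree_le_one_eval_eq w
  refine ⟨∏ a ∈ A, (W - C a), ?_, fun x ↦ ?_⟩
  · have hdeg (a : F) : (W - C a).totalDegree ≤ 1 := (totalDegree_sub_C_le W a).trans hWdeg
    calc (∏ a ∈ A, (W - C a)).totalDegree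
        ≤ ∑ a ∈ A, (W - C a).totalDegree := totalDegree_finsetProd ..
      _ ≤ ∑ _a ∈ A, 1 := by gcongr with a; exact hdeg a
      _ = #A := by simp
  · simp [hWeval, prod_eq_zero_iff, sub_eq_zero]

variable [Fintype F]

lemma one_sub_pow_card_sub_one_ne_zero_iff (a : F) : 1 - a ^ (Fintype.card F - 1) ≠ 0 ↔ a = 0 := by
  obtain rfl | ha := eq_or_ne a 0
  · simp [Nat.sub_ne_zero_of_lt (Fintype.one_lt_card (α := F))]
  · simp [ha, FiniteField.pow_card_sub_one_eq_one]

variable [Module.Finite F V]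

lemma exists_totalDegree_le_eval_ne_zero_iff_eq_zero [Finite ι] (f : (ι → F) →ₗ[F] V) :
    ∃ P : MvPolynomial ι F, P.totalDegree ≤ finrank F V * (Fintype.card F - 1) ∧
      ∀ x, eval x P ≠ 0 ↔ f x = 0 := by
  let b := finBasis F V
  choose L hLdeg hLeval using fun c ↦ exists_totalDegree_le_one_eval_eq (b.coord c ∘ₗ f)
  refine ⟨∏ c, (1 - L c ^ (Fintype.card F - 1)), ?_, fun x ↦ ?_⟩
  · have hdeg (c) : (1 - L c ^ (Fintype.card F - 1)).totalDegree ≤ Fintype.card F - 1 := by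
      refine (totalDegree_sub _ _).trans (max_le (by simp) ?_)
      simpa using (totalDegree_pow _ _).trans (Nat.mul_le_mul_left _ (hLdeg c))
    calc (∏ c, (1 - L c ^ (Fintype.card F - 1))).totalDegree
        ≤ ∑ c, (1 - L c ^ (Fintype.card F - 1)).totalDegree := totalDegree_finsetProd ..
      _ ≤ ∑ _c, (Fintype.card F - 1) := by gcongr with c; exact hdeg c
      _ = finrank F V * (Fintype.card F - 1) := by simp
  · simp only [map_prod, map_sub, map_one, map_pow, hLeval, LinearMap.comp_apply, prod_ne_zero_iff,
      mem_univ, true_imp_iff, one_sub_pow_card_sub_one_ne_zero_iff, b.forall_coord_eq_zero_iff]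

lemma exists_nonempty_sum_eq_zero_sum_notMem [Fintype ι] (g : ι → V) (w : ι → F) {A : Finset F}
    (hA : 0 ∉ A) (hcard : finrank F V * (Fintype.card F - 1) + #A < Fintype.card ι) :
    ∃ I : Finset ι, I.Nonempty ∧ ∑ i ∈ I, g i = 0 ∧ ∑ i ∈ I, w i ∉ A := by
  obtain ⟨P, hPdeg, hPeval⟩ :=
    exists_totalDegree_le_eval_ne_zero_iff_eq_zero (Fintype.linearCombination F g)
  obtain ⟨Q, hQdeg, hQeval⟩ :=
    exists_totalDegree_le_eval_ne_zero_iff_notMem (Fintype.linearCombination F w) A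
  have heval (x : ι → F) : eval x (P * Q) ≠ 0 ↔
      Fintype.linearCombination F g x = 0 ∧ Fintype.linearCombination F w x ∉ A := by
    rw [map_mul, mul_ne_zero_iff, hPeval, hQeval]
  have hdeg : (P * Q).totalDegree < Fintype.card ι :=
    ((totalDegree_mul P Q).trans (add_le_add hPdeg hQdeg)).trans_lt hcard
  obtain ⟨I, hI, hPQ⟩ :=
    exists_nonempty_eval_indicator_ne_zero hdeg ((heval 0).mpr (by simpa using hA))
  rw [heval, linearCombination_indicator_one, linearCombination_indicator_one] at hPQ
  exact ⟨I, hI, hPQ⟩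

lemma exists_le_sum_eq_zero_card_notMem {A : Finset F} (hA : 0 ∉ A) {S : Multiset V}
    (hS : finrank F V * (Fintype.card F - 1) + #A < S.card) :
    ∃ T ≤ S, T ≠ 0 ∧ T.sum = 0 ∧ (T.card : F) ∉ A := by
  classical
  obtain ⟨I, hI, hsum, hcard⟩ := exists_nonempty_sum_eq_zero_sum_notMem
    (fun i : S ↦ (i : V)) (fun _ ↦ (1 : F)) hA (by rwa [Multiset.card_coe])
  refine ⟨I.val.map fun i : S ↦ (i : V), ?_, by simpa using hI.ne_empty, hsum, by simpa using hcard⟩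
  exact (Multiset.map_le_map (val_le_iff.mpr (subset_univ I))).trans_eq S.map_univ_coe

lemma exists_le_sum_eq_zero_two_mul_card_le {T : Multiset V} (hsum : T.sum = 0)
    (hcard : finrank F V * (Fintype.card F - 1) + 1 < T.card) :
    ∃ U ≤ T, U ≠ 0 ∧ U.sum = 0 ∧ 2 * U.card ≤ T.card := by
  classical
  obtain ⟨a, ha⟩ := Multiset.card_pos_iff_exists_mem.mp (by omega : 0 < T.card)
  have hcardErase := Multiset.card_erase_add_one ha
  obtain ⟨U, hU, hU0, hUsum, -⟩ := exists_le_sum_eq_zero_card_notMem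
    (S := T.erase a) (notMem_empty (0 : F)) (by rw [card_empty]; omega)
  have hUcard := Multiset.card_le_card hU
  obtain ⟨W, rfl⟩ := Multiset.le_iff_exists_add.mp (hU.trans (T.erase_le a))
  have hUWcard := Multiset.card_add U W
  rcases le_total U.card W.card with h | h
  · exact ⟨U, Multiset.le_add_right U W, hU0, hUsum, by omega⟩
  · have hW0 : W ≠ 0 := by
      rw [← Multiset.card_pos]
      omega
    exact ⟨W, Multiset.le_add_left W U, hW0, by simpa [hUsum] using hsum, by omega⟩

end FiniteField

lemma exists_multiset_eq_add_of_le_add {α : Type*} {S A B : Multiset α} (h : S ≤ A + B) :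
    ∃ A' ≤ A, ∃ B' ≤ B, S = A' + B' := by
  classical
  exact ⟨S ∩ A, Multiset.inter_le_right, S - A, tsub_le_iff_left.mpr h,
    by rw [add_comm, Multiset.sub_add_inter]⟩

lemma exists_multiset_le_card_eq {α : Type*} {S : Multiset α} {n : ℕ} (h : n ≤ S.card) :
    ∃ T ≤ S, T.card = n := by
  obtain ⟨T, hT⟩ : ∃ T, T ∈ S.powersetCard n := by
    rw [← Multiset.card_pos_iff_exists_mem, Multiset.card_powersetCard]
    exact Nat.choose_pos h
  exact ⟨T, Multiset.mem_powersetCard.mp hT⟩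

section ShortZeroSum

variable {G : Type*} [AddCommMonoid G]

/-- The sequence `S` has a nonempty zero-sum subsequence of length at most `j`. -/
def HasShortZeroSum (j : ℕ) (S : Multiset G) : Prop :=
  ∃ T ≤ S, T ≠ 0 ∧ T.card ≤ j ∧ T.sum = 0

lemma HasShortZeroSum.mono {j : ℕ} {S S' : Multiset G} (hle : S ≤ S') (h : HasShortZeroSum j S) :
    HasShortZeroSum j S' :=
  let ⟨T, hT, hrest⟩ := h
  ⟨T, hT.trans hle, hrest⟩

variable (G) in
/-- The constant `s_{≤ j}(G)`: the least `ℓ` such that every sequence of length `ℓ` over `G` has a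
nonempty zero-sum subsequence of length at most `j` (and `0` if there is no such `ℓ`). -/
noncomputable def shortZeroSumConst (j : ℕ) : ℕ :=
  sInf {ℓ | ∀ S : Multiset G, S.card = ℓ → HasShortZeroSum j S}

lemma shortZeroSumConst_eq {j : ℕ} {S₀ : Multiset G} (hfree : ¬ HasShortZeroSum j S₀)
    (hall : ∀ S : Multiset G, S.card = S₀.card + 1 → HasShortZeroSum j S) :
    shortZeroSumConst G j = S₀.card + 1 := by
  refine IsLeast.csInf_eq ⟨hall, fun ℓ hℓ ↦ ?_⟩
  by_contra! hlt
  obtain ⟨S, hle, hcard⟩ := exists_multiset_le_card_eq (Nat.lt_succ_iff.mp hlt)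
  exact hfree ((hℓ S hcard).mono hle)

end ShortZeroSum

section UpperBound

/-- The residues `-1, …, -k` modulo `p`, which the length of a zero-sum subsequence is made to
avoid. -/
def negResidues (p k : ℕ) : Finset (ZMod p) :=
  (Icc 1 k).image fun j : ℕ ↦ -(j : ZMod p)

lemma card_negResidues_le (p k : ℕ) : #(negResidues p k) ≤ k :=
  card_image_le.trans_eq (by simp)

variable {p k : ℕ}

lemma zero_notMem_negResidues (hk : k < p) : 0 ∉ negResidues p k := by
  simp only [negResidues, mem_image, mem_Icc, neg_eq_zero, ZMod.natCast_eq_zero_iff, not_exists,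
    not_and]
  intro j hj hdvd
  have := Nat.le_of_dvd (by omega) hdvd
  omega

lemma natCast_mem_negResidues {m n : ℕ} (hn : n < m * p) (hmp : m * p ≤ n + k) :
    (n : ZMod p) ∈ negResidues p k := by
  refine mem_image.mpr ⟨m * p - n, mem_Icc.mpr (by omega), ?_⟩
  simp [Nat.cast_sub hn.le]

theorem hasShortZeroSum_of_finrank_eq_two [Fact p.Prime] {V : Type*} [AddCommGroup V]
    [Module (ZMod p) V] (hV : finrank (ZMod p) V = 2) (hk : k < p) {S : Multiset V}
    (hS : S.card = 2 * p - 1 + k) : HasShortZeroSum (2 * p - 1 - k) S := by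
  have : Module.Finite (ZMod p) V := Module.finite_of_finrank_pos (by omega)
  have hA := card_negResidues_le p k
  obtain ⟨T, hTS, hT0, hTsum, hTA⟩ := exists_le_sum_eq_zero_card_notMem
    (zero_notMem_negResidues hk) (S := S) (by rw [hV, ZMod.card]; omega)
  have hTcard := Multiset.card_le_card hTS
  have hgap (m : ℕ) (hlt : T.card < m * p) : T.card + k < m * p := by
    by_contra! h
    exact hTA (natCast_mem_negResidues hlt h)
  rcases lt_or_ge T.card (2 * p) with hshort | hlong
  · have hcard : T.card + k < 2 * p := hgap 2 hshort
    exact ⟨T, hTS, hT0, by omega, hTsum⟩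
  · have hcard : T.card + k < 3 * p := hgap 3 (by omega)
    obtain ⟨U, hUT, hU0, hUsum, hUcard⟩ := exists_le_sum_eq_zero_two_mul_card_le (F := ZMod p)
      hTsum (by rw [hV, ZMod.card]; omega)
    exact ⟨U, hUT.trans hTS, hU0, by omega, hUsum⟩

end UpperBound

section LowerBound

/-- The sequence `e₁^[n-1] · e₂^[n-1] · (e₁ + e₂)^[k]` over `(ℤ/nℤ)²`, the extremal example without
short zero-sum subsequences. -/
def extremalSeq (n k : ℕ) : Multiset (ZMod n × ZMod n) :=
  Multiset.replicate (n - 1) (1, 0) + Multiset.replicate (n - 1) (0, 1) +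
    Multiset.replicate k (1, 1)

lemma card_extremalSeq (n k : ℕ) : (extremalSeq n k).card = 2 * n - 2 + k := by
  simp only [extremalSeq, Multiset.card_add, Multiset.card_replicate]
  omega

variable {n k : ℕ}

lemma exists_eq_replicate_of_le_extremalSeq {T : Multiset (ZMod n × ZMod n)}
    (hT : T ≤ extremalSeq n k) : ∃ a ≤ n - 1, ∃ b ≤ n - 1, ∃ c ≤ k,
      T = .replicate a (1, 0) + .replicate b (0, 1) + .replicate c (1, 1) := by
  obtain ⟨_, h₁₂, _, h₃, rfl⟩ := exists_multiset_eq_add_of_le_add hT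
  obtain ⟨_, h₁, _, h₂, rfl⟩ := exists_multiset_eq_add_of_le_add h₁₂
  obtain ⟨a, ha, rfl⟩ := Multiset.le_replicate_iff.mp h₁
  obtain ⟨b, hb, rfl⟩ := Multiset.le_replicate_iff.mp h₂
  obtain ⟨c, hc, rfl⟩ := Multiset.le_replicate_iff.mp h₃
  exact ⟨a, ha, b, hb, c, hc, rfl⟩

theorem not_hasShortZeroSum_extremalSeq (hk : k < n) :
    ¬ HasShortZeroSum (2 * n - 1 - k) (extremalSeq n k) := by
  rintro ⟨T, hT, hT0, hcard, hsum⟩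
  obtain ⟨a, ha, b, hb, c, hc, rfl⟩ := exists_eq_replicate_of_le_extremalSeq hT
  have hpos : 0 < a + b + c := by simpa [add_assoc] using Multiset.card_pos.mpr hT0
  have hcard : a + b + c ≤ 2 * n - 1 - k := by simpa using hcard
  obtain ⟨hdvd₁, hdvd₂⟩ : n ∣ a + c ∧ n ∣ b + c := by
    simpa [Prod.ext_iff, ← Nat.cast_add, ZMod.natCast_eq_zero_iff] using hsum
  have hc0 : c ≠ 0 := by
    rintro rfl
    have ha0 : a = 0 := Nat.eq_zero_of_dvd_of_lt hdvd₁ (by omega)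
    have hb0 : b = 0 := Nat.eq_zero_of_dvd_of_lt hdvd₂ (by omega)
    omega
  have hac : a + c = n := Nat.eq_of_dvd_of_lt_two_mul (by omega) hdvd₁ (by omega)
  have hbc : b + c = n := Nat.eq_of_dvd_of_lt_two_mul (by omega) hdvd₂ (by omega)
  omega

end LowerBound

theorem stmt_15_general (p : ℕ) (hp : p.Prime) (k : ℕ) (hk : k < p) :
    (∀ S : Multiset (ZMod p × ZMod p), S.card = 2 * p - 1 + k →
      HasShortZeroSum (2 * p - 1 - k) S) ∧
    ((extremalSeq p k).card = 2 * p - 2 + k ∧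
      ¬ HasShortZeroSum (2 * p - 1 - k) (extremalSeq p k)) ∧
    shortZeroSumConst (ZMod p × ZMod p) (2 * p - 1 - k) = 2 * p - 1 + k := by
  have : Fact p.Prime := ⟨hp⟩
  have hupper (S : Multiset (ZMod p × ZMod p)) (hS : S.card = 2 * p - 1 + k) :
      HasShortZeroSum (2 * p - 1 - k) S :=
    hasShortZeroSum_of_finrank_eq_two (by simp) hk hS
  have hcard : (extremalSeq p k).card + 1 = 2 * p - 1 + k := by
    have := hp.two_le
    rw [card_extremalSeq]
    omega
  have hfree := not_hasShortZeroSum_extremalSeq hk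
  refine ⟨hupper, ⟨card_extremalSeq p k, hfree⟩, ?_⟩
  rw [shortZeroSumConst_eq hfree (by rwa [hcard]), hcard]

/-- `s_{≤ 2p-1-k}((ℤ/pℤ)²) = 2p-1+k` for `2 ≤ k ≤ p-2`: every sequence of length
`2p-1+k` has a nonempty zero-sum subsequence of length at most `2p-1-k`; the sequence
`e₁^[p-1] · e₂^[p-1] · (e₁+e₂)^[k]` (standard basis) has length `2p-2+k` and no such
subsequence; hence the smallest length forcing such a subsequence is `2p-1+k`. -/
theorem stmt_15 (p : ℕ) (hp : p.Prime) (k : ℕ) (hk1 : 2 ≤ k) (hk2 : k ≤ p - 2) :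
    (∀ S : Multiset (ZMod p × ZMod p), Multiset.card S = 2 * p - 1 + k →
      ∃ T ≤ S, T ≠ 0 ∧ Multiset.card T ≤ 2 * p - 1 - k ∧ T.sum = 0) ∧
    (Multiset.card (Multiset.replicate (p - 1) ((1, 0) : ZMod p × ZMod p) +
        Multiset.replicate (p - 1) ((0, 1) : ZMod p × ZMod p) +
        Multiset.replicate k ((1, 1) : ZMod p × ZMod p)) = 2 * p - 2 + k ∧
      ∀ T ≤ Multiset.replicate (p - 1) ((1, 0) : ZMod p × ZMod p) +
          Multiset.replicate (p - 1) ((0, 1) : ZMod p × ZMod p) +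
          Multiset.replicate k ((1, 1) : ZMod p × ZMod p),
        T ≠ 0 → Multiset.card T ≤ 2 * p - 1 - k → T.sum ≠ 0) ∧
    sInf {ℓ : ℕ | ∀ S : Multiset (ZMod p × ZMod p), Multiset.card S = ℓ →
      ∃ T ≤ S, T ≠ 0 ∧ Multiset.card T ≤ 2 * p - 1 - k ∧ T.sum = 0} = 2 * p - 1 + k := by
  obtain ⟨hupper, ⟨hcard, hfree⟩, hconst⟩ := stmt_15_general p hp k (by omega)
  exact ⟨hupper, ⟨hcard, fun T hT h0 hle hsum ↦ hfree ⟨T, hT, h0, hle, hsum⟩⟩, hconst⟩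
end
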